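/- (Theorem 1) Let N ≥ 4 and let q^e = (x^e, y^e) be a placement with pairwise distinct node positions and x^e, y^e, 1 linearly independent. Suppose the stress matrix Ω is positive semidefinite with kernel exactly span{x^e, y^e, 1}; for each edge with ω_ij ≠ 0 set α_ij = π/arctan(ω_ij) and l_ij = r^e_ij (1 − arctan(ω_ij)/π); and suppose the rank-one matrices (q^e_i − q^e_j)(q^e_i − q^e_j)ᵀ over the edges with ω_ij ≠ 0 span the space of symmetric 2×2 matrices. Then q^e is a critical point and a local minimum of the augmented potential Ṽ, and it is isolated modulo rigid motions: there exists ε > 0 such that every critical point q of Ṽ with ‖q − q^e‖ < ε is of the form q_i = R q^e_i + t for all i, for some rotation R ∈ SO(2) and translation t ∈ ℝ². -/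

import Mathlib

open Finset Matrix Real

/-- The stress matrix of symmetric stresses `ω`: off-diagonal entries `-ω i j`,
diagonal entries `∑_{k ≠ i} ω i k`. -/
noncomputable def stressMatrix {N : ℕ} (ω : Fin N → Fin N → ℝ) : Matrix (Fin N) (Fin N) ℝ :=
  Matrix.of fun i j => if i = j then ∑ k ∈ Finset.univ.erase i, ω i k else -ω i j

/-!
With `w` the stress that the springs exert in a placement `p`, the potential has the exact expansion
`2 V(q) = 2 V(p) + (⟨q, Ω_w q⟩ - ⟨p, Ω_w p⟩) + ∑ (k l / r_p) (r_q - r_p)²`, whose last sum is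
nonnegative. At `p = q^e` the stress is `ω` and `⟨p, Ω p⟩ = 0 ≤ ⟨q, Ω q⟩`, so `q^e` is a global
minimum. The same expansion based at a nearby critical point `q` gives the reverse inequality
`V(q) ≤ V(q^e)`: by criticality the affine images of `q` lie in the kernel of `Ω_{w(q)}`, and on a
fixed complement of the affine images of `q^e` the form stays nonnegative by compactness, so
`0 ≤ ⟨q^e, Ω_{w(q)} q^e⟩`. Equality then forces `⟨q, Ω q⟩ = 0` and equal edge lengths, that is, `q`
is an affine image of `q^e` whose linear part preserves the lengths of the stressed edges; since no
nonzero quadratic form vanishes on all of those, the linear part is an isometry. It is a rotation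
because its determinant is near `1`.
-/

open Topology Filter Module
open scoped RealInnerProductSpace

section StressForm

variable {ι E : Type*} [Fintype ι] [NormedAddCommGroup E] [InnerProductSpace ℝ E]

variable (E) in
/-- The edge vector `q i - q j` of a placement `q`, as a continuous linear map of `q`. -/
def edgeVector (i j : ι) : (ι → E) →L[ℝ] E :=
  ContinuousLinearMap.proj (R := ℝ) (φ := fun _ : ι => E) i - ContinuousLinearMap.proj j

/-- The bilinear form `∑ i j, w i j ⟪p i - p j, q i - q j⟫` of the stress `w` on placements in `E`.
All ordered pairs are summed and `w` need not be symmetric, so a sum over `i < j` is obtained from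
weights that vanish unless `i < j`. -/
noncomputable def stressForm (w : ι → ι → ℝ) : LinearMap.BilinForm ℝ (ι → E) :=
  ∑ i, ∑ j, w i j • (innerₗ E).compl₁₂ (edgeVector E i j).toLinearMap (edgeVector E i j).toLinearMap

lemma stressForm_apply (w : ι → ι → ℝ) (p q : ι → E) :
    stressForm w p q = ∑ i, ∑ j, w i j * ⟪p i - p j, q i - q j⟫ := by
  simp [stressForm, edgeVector, inner_sub_left, LinearMap.sum_apply]

lemma stressForm_apply_self (w : ι → ι → ℝ) (q : ι → E) :
    stressForm w q q = ∑ i, ∑ j, w i j * ‖q i - q j‖ ^ 2 := by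
  simp only [stressForm_apply, real_inner_self_eq_norm_sq]

lemma stressForm_comm (w : ι → ι → ℝ) (p q : ι → E) : stressForm w p q = stressForm w q p := by
  simp only [stressForm_apply, real_inner_comm]

lemma stressForm_const_left (w : ι → ι → ℝ) (t : E) (q : ι → E) :
    stressForm w (fun _ => t) q = 0 := by
  simp [stressForm_apply]

lemma stressForm_map_left [CompleteSpace E] (w : ι → ι → ℝ) (B : E →L[ℝ] E) (p q : ι → E) :
    stressForm w (fun i => B (p i)) q = stressForm w p (fun i => B.adjoint (q i)) := by
  simp only [stressForm_apply, ← map_sub, ContinuousLinearMap.adjoint_inner_right]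

lemma stressForm_affine_add_self [CompleteSpace E] {w : ι → ι → ℝ} {q : ι → E}
    (hq : ∀ h, stressForm w q h = 0) (B : E →L[ℝ] E) (t : E) (v : ι → E) :
    stressForm w (fun i => B (q i) + t + v i) (fun i => B (q i) + t + v i) = stressForm w v v := by
  have affine_left (h : ι → E) : stressForm w (fun i => B (q i) + t) h = 0 := by
    change stressForm w ((fun i => B (q i)) + fun _ => t) h = 0
    rw [LinearMap.map_add₂, stressForm_map_left, hq, stressForm_const_left, add_zero]
  change stressForm w ((fun i => B (q i) + t) + v) ((fun i => B (q i) + t) + v) = _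
  rw [LinearMap.map_add₂, affine_left, zero_add, map_add, stressForm_comm, affine_left, zero_add]

end StressForm

section SpringPotential

variable {ι E : Type*} [NormedAddCommGroup E]

/-- The elastic energy of springs with stiffness `k i j` and rest length `l i j`, over all ordered
pairs. -/
noncomputable def springPotential [Fintype ι] (k l : ι → ι → ℝ) (q : ι → E) : ℝ :=
  1 / 2 * ∑ i, ∑ j, k i j * (‖q i - q j‖ - l i j) ^ 2

/-- The force densities of the springs in the placement `q`: tension divided by length. A pair of
coincident nodes gets the junk value `k i j`. -/
noncomputable def springStress (k l : ι → ι → ℝ) (q : ι → E) (i j : ι) : ℝ :=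
  k i j * (1 - l i j / ‖q i - q j‖)

variable {k l : ι → ι → ℝ} {p q : ι → E}

lemma continuousAt_springStress (hp : ∀ i j, k i j ≠ 0 → p i ≠ p j) :
    ContinuousAt (springStress k l) p := by
  refine continuousAt_pi.2 fun i => continuousAt_pi.2 fun j => ?_
  by_cases hk : k i j = 0
  · simpa [springStress, hk] using continuousAt_const
  · have norm_ne : ‖p i - p j‖ ≠ 0 := norm_ne_zero_iff.2 (sub_ne_zero.2 (hp i j hk))
    unfold springStress
    fun_prop (disch := exact norm_ne)

lemma eventually_edges_ne [Finite ι] (hp : ∀ i j, k i j ≠ 0 → p i ≠ p j) :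
    ∀ᶠ q in 𝓝 p, ∀ i j, k i j ≠ 0 → q i ≠ q j := by
  simp only [eventually_all]
  exact fun i j hk =>
    (isOpen_ne_fun (continuous_apply i) (continuous_apply j)).mem_nhds (hp i j hk)

variable [InnerProductSpace ℝ E]

lemma hasFDerivAt_sq_norm_sub_const {x : E} (hx : x ≠ 0) (c : ℝ) :
    HasFDerivAt (fun x : E => (‖x‖ - c) ^ 2) ((2 * (1 - c / ‖x‖)) • innerSL ℝ x) x := by
  have norm_ne : ‖x‖ ≠ 0 := norm_ne_zero_iff.2 hx
  have hasFDerivAt_norm : HasFDerivAt (fun x : E => ‖x‖) (‖x‖⁻¹ • innerSL ℝ x) x := by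
    have := (hasStrictFDerivAt_norm_sq x).hasFDerivAt.sqrt (pow_ne_zero 2 norm_ne)
    simp only [sqrt_sq (norm_nonneg _)] at this
    refine this.congr_fderiv ?_
    ext y
    simp only [one_div, _root_.mul_inv_rev, _root_.smul_apply, coe_innerSL_apply, nsmul_eq_mul,
      Nat.cast_ofNat, smul_eq_mul]
    field_simp
  refine ((hasFDerivAt_norm.sub_const c).pow 2).congr_fderiv ?_
  ext y
  simp only [Nat.add_one_sub_one, pow_one, nsmul_eq_mul, Nat.cast_ofNat, _root_.smul_apply,
    coe_innerSL_apply, smul_eq_mul]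
  field_simp

lemma spring_energy_expansion (κ c r : ℝ) {s : ℝ} (hs : s ≠ 0) :
    κ * (r - c) ^ 2 = κ * (s - c) ^ 2 + κ * (1 - c / s) * (r ^ 2 - s ^ 2)
      + κ * c / s * (r - s) ^ 2 := by
  field_simp
  ring

variable [Fintype ι]

lemma fderiv_springPotential_apply (hq : ∀ i j, k i j ≠ 0 → q i ≠ q j) (h : ι → E) :
    fderiv ℝ (springPotential k l) q h = stressForm (springStress k l q) q h := by
  have hasFDerivAt_spring (i j : ι) :
      HasFDerivAt (fun q : ι → E => k i j * (‖q i - q j‖ - l i j) ^ 2)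
        ((2 * springStress k l q i j) • (innerSL ℝ (q i - q j)).comp (edgeVector E i j)) q := by
    by_cases hk : k i j = 0
    · simpa [springStress, hk] using hasFDerivAt_const (0 : ℝ) q
    · have hasFDerivAt_sq : HasFDerivAt (fun q : ι → E => (‖q i - q j‖ - l i j) ^ 2) _ q :=
        HasFDerivAt.comp (f := edgeVector E i j) q
          (hasFDerivAt_sq_norm_sub_const (sub_ne_zero.2 (hq i j hk)) (l i j))
          (edgeVector E i j).hasFDerivAt
      refine (hasFDerivAt_sq.const_mul (k i j)).congr_fderiv ?_
      ext y
      simp only [ContinuousLinearMap.comp_apply, _root_.smul_apply, smul_eq_mul, springStress]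
      ring
  have hasFDerivAt_potential : HasFDerivAt (springPotential k l) _ q :=
    (HasFDerivAt.fun_sum fun i (_ : i ∈ univ) => HasFDerivAt.fun_sum fun j (_ : j ∈ univ) =>
      hasFDerivAt_spring i j).const_mul (1 / 2 : ℝ)
  rw [hasFDerivAt_potential.fderiv, stressForm_apply]
  simp [edgeVector, _root_.sum_apply, mul_sum, inner_sub_left, inner_sub_right, ← mul_assoc]

lemma springPotential_expansion (hp : ∀ i j, k i j ≠ 0 → p i ≠ p j) (q : ι → E) :
    2 * springPotential k l q = 2 * springPotential k l p
      + (stressForm (springStress k l p) q q - stressForm (springStress k l p) p p)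
      + ∑ i, ∑ j, k i j * l i j / ‖p i - p j‖ * (‖q i - q j‖ - ‖p i - p j‖) ^ 2 := by
  simp only [springPotential, stressForm_apply_self, springStress, ← mul_assoc, mul_one_div_cancel
    (two_ne_zero' ℝ), one_mul, ← sum_add_distrib, ← sum_sub_distrib, ← mul_sub]
  refine sum_congr rfl fun i _ => sum_congr rfl fun j _ => ?_
  by_cases hk : k i j = 0
  · simp [hk]
  · exact spring_energy_expansion _ _ _ (norm_ne_zero_iff.2 (sub_ne_zero.2 (hp i j hk)))

lemma mul_nonneg_of_ne_zero_imp_pos {a b : ℝ} (h : a ≠ 0 → 0 < a * b) : 0 ≤ a * b := by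
  rcases eq_or_ne a 0 with rfl | ha
  · simp
  · exact (h ha).le

lemma springPotential_le (hkl : ∀ i j, 0 ≤ k i j * l i j) (hp : ∀ i j, k i j ≠ 0 → p i ≠ p j)
    (hpq : stressForm (springStress k l p) p p ≤ stressForm (springStress k l p) q q) :
    springPotential k l p ≤ springPotential k l q := by
  have remainder_nonneg :
      0 ≤ ∑ i, ∑ j, k i j * l i j / ‖p i - p j‖ * (‖q i - q j‖ - ‖p i - p j‖) ^ 2 :=
    sum_nonneg fun i _ => sum_nonneg fun j _ =>
      mul_nonneg (div_nonneg (hkl i j) (norm_nonneg _)) (sq_nonneg _)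
  linarith [springPotential_expansion (l := l) hp q]

lemma stressForm_eq_and_norm_sub_eq_of_springPotential_le
    (hkl : ∀ i j, k i j ≠ 0 → 0 < k i j * l i j) (hp : ∀ i j, k i j ≠ 0 → p i ≠ p j)
    (hpq : stressForm (springStress k l p) p p ≤ stressForm (springStress k l p) q q)
    (hqp : springPotential k l q ≤ springPotential k l p) :
    stressForm (springStress k l p) q q = stressForm (springStress k l p) p p ∧
      ∀ i j, k i j ≠ 0 → ‖q i - q j‖ = ‖p i - p j‖ := by
  have term_nonneg (i j : ι) :
      0 ≤ k i j * l i j / ‖p i - p j‖ * (‖q i - q j‖ - ‖p i - p j‖) ^ 2 :=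
    mul_nonneg (div_nonneg (mul_nonneg_of_ne_zero_imp_pos (hkl i j)) (norm_nonneg _)) (sq_nonneg _)
  have row_nonneg (i : ι) := sum_nonneg fun j (_ : j ∈ univ) => term_nonneg i j
  have expansion := springPotential_expansion (l := l) hp q
  have remainder_nonneg := sum_nonneg fun i (_ : i ∈ univ) => row_nonneg i
  refine ⟨by linarith, fun i j hk => ?_⟩
  have remainder_eq_zero :
      ∑ i, ∑ j, k i j * l i j / ‖p i - p j‖ * (‖q i - q j‖ - ‖p i - p j‖) ^ 2 = 0 := by linarith
  have row_eq_zero := (sum_eq_zero_iff_of_nonneg fun i _ => row_nonneg i).1 remainder_eq_zero i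
    (mem_univ i)
  have term_eq_zero := (sum_eq_zero_iff_of_nonneg fun j _ => term_nonneg i j).1 row_eq_zero j
    (mem_univ j)
  have coeff_pos : 0 < k i j * l i j / ‖p i - p j‖ :=
    div_pos (hkl i j hk) (norm_pos_iff.2 (sub_ne_zero.2 (hp i j hk)))
  simpa [coeff_pos.ne', sub_eq_zero] using term_eq_zero

end SpringPotential

section Perturbation

lemma eventually_forall_mem_apply_self_nonneg {X V : Type*} [TopologicalSpace X]
    [NormedAddCommGroup V] [NormedSpace ℝ V] [FiniteDimensional ℝ V]
    {B : X → LinearMap.BilinForm ℝ V} {x₀ : X} (W : Submodule ℝ V)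
    (hB : ∀ v, ContinuousAt (fun z : X × V => B z.1 z.2 z.2) (x₀, v))
    (hpos : ∀ v ∈ W, v ≠ 0 → 0 < B x₀ v v) :
    ∀ᶠ x in 𝓝 x₀, ∀ v ∈ W, 0 ≤ B x v v := by
  have : ProperSpace V := FiniteDimensional.proper ℝ V
  have unit_sphere_compact : IsCompact (Metric.sphere (0 : V) 1 ∩ W) :=
    (isCompact_sphere 0 1).inter_right W.closed_of_finiteDimensional
  have pos_on_sphere : ∀ᶠ x in 𝓝 x₀, ∀ v ∈ Metric.sphere (0 : V) 1 ∩ W, 0 < B x v v := by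
    refine unit_sphere_compact.eventually_forall_of_forall_eventually fun v ⟨hv, hvW⟩ => ?_
    exact (hB v).eventually
      (lt_mem_nhds (hpos v hvW (ne_zero_of_mem_unit_sphere ⟨v, hv⟩)))
  filter_upwards [pos_on_sphere] with x hx v hv
  rcases eq_or_ne v 0 with rfl | hv0
  · simp
  · have normalized_pos := hx (‖v‖⁻¹ • v) ⟨by simp [norm_smul, hv0], W.smul_mem _ hv⟩
    simp only [map_smul, LinearMap.smul_apply, smul_eq_mul, ← mul_assoc] at normalized_pos
    exact (pos_of_mul_pos_right normalized_pos (by positivity)).le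

lemma continuousAt_stressForm_apply_self {X ι E : Type*} [TopologicalSpace X] [Fintype ι]
    [NormedAddCommGroup E] [InnerProductSpace ℝ E] {w : X → ι → ι → ℝ} {x₀ : X}
    (hw : ContinuousAt w x₀) (v : ι → E) :
    ContinuousAt (fun z : X × (ι → E) => stressForm (w z.1) z.2 z.2) (x₀, v) := by
  simp only [stressForm_apply_self]
  have hw_fst : ContinuousAt (fun z : X × (ι → E) => w z.1) (x₀, v) :=
    ContinuousAt.comp (g := w) hw continuousAt_fst
  have hw_entry (i j : ι) : ContinuousAt (fun z : X × (ι → E) => w z.1 i j) (x₀, v) :=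
    continuousAt_pi.1 (continuousAt_pi.1 hw_fst i) j
  refine tendsto_finsetSum _ fun i _ => tendsto_finsetSum _ fun j _ => ?_
  exact (hw_entry i j).mul (by fun_prop)

end Perturbation

section AffineFit

variable {ι E : Type*} [NormedAddCommGroup E] [NormedSpace ℝ E]

/-- A linear rule fitting an affine map `x ↦ linear q x + translation q` to every placement `q`,
regarded as a perturbation of `p`. The rule recovers `x ↦ B x + s` from the affine image of `p`
under it, and commutes with linear maps applied to the nodes. -/
structure AffineFit (p : ι → E) where
  linear : (ι → E) →ₗ[ℝ] E →L[ℝ] E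
  translation : (ι → E) →ₗ[ℝ] E
  linear_affine (B : E →L[ℝ] E) (s : E) : linear (fun i => B (p i) + s) = B
  translation_affine (B : E →L[ℝ] E) (s : E) : translation (fun i => B (p i) + s) = s
  linear_map (B : E →L[ℝ] E) (v : ι → E) : linear (fun i => B (v i)) = B ∘L linear v
  translation_map (B : E →L[ℝ] E) (v : ι → E) : translation (fun i => B (v i)) = B (translation v)

namespace AffineFit

variable {p : ι → E} (fit : AffineFit p)

/-- The placements whose fitted affine map vanishes: a complement of the affine images of `p`. -/
def residuals : Submodule ℝ (ι → E) :=
  LinearMap.ker fit.linear ⊓ LinearMap.ker fit.translation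

lemma mem_residuals {v : ι → E} :
    v ∈ fit.residuals ↔ fit.linear v = 0 ∧ fit.translation v = 0 :=
  Iff.rfl

lemma map_mem_residuals (B : E →L[ℝ] E) {v : ι → E} (hv : v ∈ fit.residuals) :
    (fun i => B (v i)) ∈ fit.residuals := by
  rw [mem_residuals] at hv ⊢
  simp [fit.linear_map, fit.translation_map, hv]

lemma sub_affine_mem_residuals (q : ι → E) :
    (fun i => q i - (fit.linear q (p i) + fit.translation q)) ∈ fit.residuals := by
  change q - (fun i => fit.linear q (p i) + fit.translation q) ∈ fit.residuals
  simp [mem_residuals, fit.linear_affine, fit.translation_affine]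

lemma eq_zero_of_affine_mem_residuals {B : E →L[ℝ] E} {s : E}
    (h : (fun i => B (p i) + s) ∈ fit.residuals) : (fun i => B (p i) + s) = 0 := by
  obtain ⟨rfl, rfl⟩ : B = 0 ∧ s = 0 := by
    simpa [mem_residuals, fit.linear_affine, fit.translation_affine] using h
  ext i
  simp

lemma eventually_det_linear_pos [Finite ι] [FiniteDimensional ℝ E] :
    ∀ᶠ q in 𝓝 p, 0 < (fit.linear q).det := by
  have := Fintype.ofFinite ι
  have linear_self : fit.linear p = ContinuousLinearMap.id ℝ E := by
    simpa using fit.linear_affine (.id ℝ E) 0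
  have continuous_det_linear : Continuous fun q => (fit.linear q).det :=
    ContinuousLinearMap.continuous_det.comp fit.linear.continuous_of_finiteDimensional
  refine continuous_det_linear.continuousAt.eventually (lt_mem_nhds ?_)
  simp [linear_self, ContinuousLinearMap.det]

end AffineFit

variable {p : ι → E}

lemma exists_affine_weights [Fintype ι]
    (hp : ∀ (f : Dual ℝ E) (a : ℝ), (∀ i, f (p i) + a = 0) → f = 0 ∧ a = 0) :
    ∃ c : E × ℝ →ₗ[ℝ] ι → ℝ, ∀ z, ∑ i, c z i • p i = z.1 ∧ ∑ i, c z i = z.2 := by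
  let moments : (ι → ℝ) →ₗ[ℝ] E × ℝ :=
    (Fintype.linearCombination ℝ p).prod (Fintype.linearCombination ℝ fun _ => (1 : ℝ))
  have moments_surjective : LinearMap.range moments = ⊤ := by
    by_contra hne
    obtain ⟨φ, φ_ne, range_le⟩ := (LinearMap.range moments).exists_le_ker_of_lt_top
      (lt_top_iff_ne_top.2 hne)
    classical
    have φ_node (i : ι) : φ (p i, 0) + φ (0, 1) = 0 := by
      have : φ (moments (Pi.single i 1)) = 0 := range_le ⟨_, rfl⟩
      simpa [moments, ← map_add, Fintype.linearCombination_apply_single] using this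
    obtain ⟨hlin, hconst⟩ := hp (φ ∘ₗ LinearMap.inl ℝ E ℝ) (φ (0, 1)) φ_node
    exact φ_ne (LinearMap.prod_ext hlin (LinearMap.ext_ring hconst))
  obtain ⟨c, hc⟩ := moments.exists_rightInverse_of_surjective moments_surjective
  refine ⟨c, fun z => ?_⟩
  have hz : moments (c z) = z := LinearMap.congr_fun hc z
  simpa [moments, Fintype.linearCombination_apply, Prod.ext_iff] using hz

lemma nonempty_affineFit [Finite ι] [FiniteDimensional ℝ E]
    (hp : ∀ (f : Dual ℝ E) (a : ℝ), (∀ i, f (p i) + a = 0) → f = 0 ∧ a = 0) :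
    Nonempty (AffineFit p) := by
  have := Fintype.ofFinite ι
  obtain ⟨c, hc⟩ := exists_affine_weights hp
  have sum_affine (z : E × ℝ) (B : E →L[ℝ] E) (s : E) :
      ∑ i, c z i • (B (p i) + s) = B z.1 + z.2 • s := by
    simp only [smul_add, sum_add_distrib, ← map_smul, ← map_sum, ← sum_smul, hc z]
  let combine : (ι → E) →ₗ[ℝ] (ι → ℝ) →ₗ[ℝ] E := Fintype.bilinearCombination ℝ ℝ
  exact ⟨{
    linear := LinearMap.toContinuousLinearMap.toLinearMap ∘ₗ combine.compl₂ (c ∘ₗ .inl ℝ E ℝ)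
    translation := combine.flip (c (0, 1))
    linear_affine B s := by
      ext x; simpa [combine, Fintype.linearCombination_apply] using sum_affine (x, 0) B s
    translation_affine B s := by
      simpa [combine, Fintype.linearCombination_apply] using sum_affine (0, 1) B s
    linear_map B v := by ext x; simp [combine, Fintype.linearCombination_apply]
    translation_map B v := by simp [combine, Fintype.linearCombination_apply] }⟩

end AffineFit

section SuperStability

variable {ι E : Type*} [Fintype ι] [NormedAddCommGroup E] [InnerProductSpace ℝ E]

/-- Super stability in the sense of Connelly: `ω` is an equilibrium stress of `p`, is positive
semidefinite with only the affine images of `p` in its kernel, and the stressed edges do not lie on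
a conic at infinity. For a positive semidefinite stress, equilibrium says that the energy of `p`
vanishes. -/
structure IsSuperStable (ω : ι → ι → ℝ) (p : ι → E) : Prop where
  apply_self_eq_zero : stressForm ω p p = 0
  nonneg (v : ι → E) : 0 ≤ stressForm ω v v
  exists_affine_of_eq_zero (v : ι → E) :
    stressForm ω v v = 0 → ∃ (B : E →L[ℝ] E) (s : E), v = fun i => B (p i) + s
  no_conic (Q : QuadraticForm ℝ E) : (∀ i j, ω i j ≠ 0 → Q (p i - p j) = 0) → Q = 0

namespace IsSuperStable

variable {ω : ι → ι → ℝ} {p : ι → E}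

lemma nonempty_affineFit [Nonempty ι] [FiniteDimensional ℝ E] (h : IsSuperStable ω p) :
    Nonempty (AffineFit p) := by
  refine _root_.nonempty_affineFit fun f a hfa => ?_
  have hf : f = 0 := by
    have sq_eq_zero := h.no_conic (QuadraticMap.linMulLin f f) fun i j _ => by
      have : f (p i) = f (p j) := by linarith [hfa i, hfa j]
      simp [this]
    ext x
    simpa using congrArg (· x) sq_eq_zero
  have := hfa (Classical.arbitrary ι)
  exact ⟨hf, by simpa [hf] using this⟩

lemma norm_map_eq_of_norm_edges_eq (h : IsSuperStable ω p) (A : E →L[ℝ] E)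
    (hA : ∀ i j, ω i j ≠ 0 → ‖A (p i - p j)‖ = ‖p i - p j‖) (x : E) : ‖A x‖ = ‖x‖ := by
  let normSq : QuadraticForm ℝ E := LinearMap.BilinMap.toQuadraticMap (innerₗ E)
  have normSq_apply (x : E) : normSq x = ‖x‖ ^ 2 := real_inner_self_eq_norm_sq x
  have distortion_eq_zero := h.no_conic (normSq.comp A.toLinearMap - normSq) fun i j hij => by
    simpa [normSq_apply, sub_eq_zero, ← map_sub] using hA i j hij
  simpa [normSq_apply, sub_eq_zero] using congrArg (· x) distortion_eq_zero

lemma eventually_forall_mem_residuals_nonneg [FiniteDimensional ℝ E] (h : IsSuperStable ω p)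
    (fit : AffineFit p) :
    ∀ᶠ w in 𝓝 ω, ∀ v ∈ fit.residuals, 0 ≤ stressForm w v v := by
  refine eventually_forall_mem_apply_self_nonneg (B := fun w => stressForm w) fit.residuals
    (continuousAt_stressForm_apply_self continuousAt_id) fun v hv hv0 => ?_
  refine (h.nonneg v).lt_of_ne' fun hzero => hv0 ?_
  obtain ⟨B, s, rfl⟩ := h.exists_affine_of_eq_zero v hzero
  exact fit.eq_zero_of_affine_mem_residuals hv

end IsSuperStable

-- Inverting the fit `q = A p + s + residual` writes `p` as an affine image of `q` plus a residual,
-- and the affine images of `q` lie in the kernel of `stressForm w`.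
lemma stressForm_apply_self_nonneg_of_equilibrium [FiniteDimensional ℝ E] {w : ι → ι → ℝ}
    {p q : ι → E} (fit : AffineFit p) (hdet : (fit.linear q).det ≠ 0)
    (hq : ∀ h, stressForm w q h = 0) (hw : ∀ v ∈ fit.residuals, 0 ≤ stressForm w v v) :
    0 ≤ stressForm w p p := by
  let A := (fit.linear q).toContinuousLinearEquivOfDetNeZero hdet
  let B : E →L[ℝ] E := A.symm
  let r : ι → E := fun i => q i - (fit.linear q (p i) + fit.translation q)
  have p_eq : p = fun i => B (q i) + -B (fit.translation q) + (-B) (r i) := by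
    ext i
    have : B (fit.linear q (p i)) = p i := A.symm_apply_apply (p i)
    simp only [r, _root_.neg_apply, map_sub, map_add, this]
    abel
  have : stressForm w p p = stressForm w (fun i => (-B) (r i)) (fun i => (-B) (r i)) := by
    conv_lhs => rw [p_eq]
    exact stressForm_affine_add_self hq _ _ _
  rw [this]
  exact hw _ (fit.map_mem_residuals _ (fit.sub_affine_mem_residuals q))

variable {k l : ι → ι → ℝ} {p : ι → E}

lemma IsSuperStable.springPotential_le (h : IsSuperStable (springStress k l p) p)
    (hkl : ∀ i j, k i j ≠ 0 → 0 < k i j * l i j) (hp : ∀ i j, k i j ≠ 0 → p i ≠ p j) (q : ι → E) :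
    springPotential k l p ≤ springPotential k l q :=
  _root_.springPotential_le (fun i j => mul_nonneg_of_ne_zero_imp_pos (hkl i j)) hp
    (h.apply_self_eq_zero.trans_le (h.nonneg q))

lemma IsSuperStable.exists_isometry_of_affine [FiniteDimensional ℝ E] {ω : ι → ι → ℝ}
    (h : IsSuperStable ω p) {A : E →L[ℝ] E} (hdet : 0 < A.det) {q : ι → E} {t : E}
    (hq : ∀ i, q i = A (p i) + t) (hedges : ∀ i j, ω i j ≠ 0 → ‖q i - q j‖ = ‖p i - p j‖) :
    ∃ (R : E ≃ₗᵢ[ℝ] E) (t : E), LinearMap.det (R : E →ₗ[ℝ] E) = 1 ∧ ∀ i, q i = R (p i) + t := by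
  have norm_map : ∀ x, ‖A x‖ = ‖x‖ := h.norm_map_eq_of_norm_edges_eq A fun i j hij => by
    simpa [hq] using hedges i j hij
  let U : E →ₗᵢ[ℝ] E := ⟨A.toLinearMap, norm_map⟩
  have det_eq_one : LinearMap.det A.toLinearMap = 1 := by
    have abs_det_eq_one := LinearMap.normDet_eq_abs_det (U.toLinearMap) ▸ U.normDet_eq_one
    rwa [abs_of_pos hdet] at abs_det_eq_one
  exact ⟨U.toLinearIsometryEquiv rfl, t, det_eq_one, hq⟩

theorem IsSuperStable.eventually_isometric_of_fderiv_eq_zero [Nonempty ι] [FiniteDimensional ℝ E]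
    (h : IsSuperStable (springStress k l p) p) (hkl : ∀ i j, k i j ≠ 0 → 0 < k i j * l i j)
    (hp : ∀ i j, k i j ≠ 0 → p i ≠ p j) :
    ∀ᶠ q in 𝓝 p, fderiv ℝ (springPotential k l) q = 0 →
      ∃ (R : E ≃ₗᵢ[ℝ] E) (t : E), LinearMap.det (R : E →ₗ[ℝ] E) = 1 ∧ ∀ i, q i = R (p i) + t := by
  obtain ⟨fit⟩ := h.nonempty_affineFit
  filter_upwards [eventually_edges_ne hp, fit.eventually_det_linear_pos,
    (continuousAt_springStress hp).eventually (h.eventually_forall_mem_residuals_nonneg fit)]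
    with q hq hdet nonneg_residuals hcrit
  have equilibrium (v : ι → E) : stressForm (springStress k l q) q v = 0 := by
    rw [← fderiv_springPotential_apply hq, hcrit, _root_.zero_apply]
  have potential_le : springPotential k l q ≤ springPotential k l p := by
    refine _root_.springPotential_le (fun i j => mul_nonneg_of_ne_zero_imp_pos (hkl i j)) hq ?_
    rw [equilibrium]
    exact stressForm_apply_self_nonneg_of_equilibrium fit hdet.ne' equilibrium nonneg_residuals
  obtain ⟨hqq, hedges⟩ := stressForm_eq_and_norm_sub_eq_of_springPotential_le hkl hp
    (h.apply_self_eq_zero.trans_le (h.nonneg q)) potential_le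
  obtain ⟨A, t, rfl⟩ := h.exists_affine_of_eq_zero q (hqq.trans h.apply_self_eq_zero)
  rw [fit.linear_affine] at hdet
  exact h.exists_isometry_of_affine hdet (fun i => rfl) fun i j hij =>
    hedges i j fun hk => hij (by simp [springStress, hk])

end SuperStability

section UpperTriangle

variable {ι : Type*} [LinearOrder ι]

/-- The restriction of edge weights to `i < j`, which makes a sum over ordered pairs count every
unordered pair once. -/
def upperTriangle (w : ι → ι → ℝ) (i j : ι) : ℝ :=
  if i < j then w i j else 0

lemma upperTriangle_ne_zero {w : ι → ι → ℝ} {i j : ι} :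
    upperTriangle w i j ≠ 0 ↔ i < j ∧ w i j ≠ 0 := by
  simp [upperTriangle]

lemma springPotential_upperTriangle [Fintype ι] {E : Type*} [NormedAddCommGroup E]
    (k l : ι → ι → ℝ) (q : ι → E) :
    springPotential (upperTriangle k) l q =
      1 / 2 * ∑ i, ∑ j, if i < j then k i j * (‖q i - q j‖ - l i j) ^ 2 else 0 := by
  simp only [springPotential, upperTriangle, ite_mul, zero_mul]

lemma sum_upperTriangle_add_self [Fintype ι] {F : ι → ι → ℝ} (hF : ∀ i j, F i j = F j i)
    (hdiag : ∀ i, F i i = 0) :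
    ∑ i, ∑ j, upperTriangle F i j + ∑ i, ∑ j, upperTriangle F i j = ∑ i, ∑ j, F i j := by
  conv_lhs => enter [2]; rw [sum_comm]
  simp only [← sum_add_distrib]
  refine sum_congr rfl fun i _ => sum_congr rfl fun j _ => ?_
  rcases lt_trichotomy i j with hij | rfl | hij
  · simp [upperTriangle, hij, hij.not_gt]
  · simp [upperTriangle, hdiag]
  · simp [upperTriangle, hij, hij.not_gt, hF i j]

end UpperTriangle

section StressMatrix

variable {N : ℕ} {ω : Fin N → Fin N → ℝ}

lemma stressMatrix_mulVec_apply (ω : Fin N → Fin N → ℝ) (u : Fin N → ℝ) (i : Fin N) :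
    (stressMatrix ω *ᵥ u) i = ∑ j, ω i j * (u i - u j) := by
  have diagonal : stressMatrix ω i i = ∑ j ∈ univ.erase i, ω i j := by simp [stressMatrix]
  have off_diagonal {j : Fin N} (hj : j ∈ univ.erase i) : stressMatrix ω i j = -ω i j := by
    simp [stressMatrix, (ne_of_mem_erase hj).symm]
  rw [mulVec, dotProduct, ← add_sum_erase _ _ (mem_univ i), diagonal, sum_mul, ← sum_add_distrib,
    ← add_sum_erase univ (fun j => ω i j * (u i - u j)) (mem_univ i), sub_self, mul_zero, zero_add]
  refine sum_congr rfl fun j hj => ?_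
  rw [off_diagonal hj]
  ring

lemma dotProduct_stressMatrix_mulVec_add_self (hω : ∀ i j, ω i j = ω j i) (u : Fin N → ℝ) :
    u ⬝ᵥ stressMatrix ω *ᵥ u + u ⬝ᵥ stressMatrix ω *ᵥ u = ∑ i, ∑ j, ω i j * (u i - u j) ^ 2 := by
  simp only [dotProduct, stressMatrix_mulVec_apply, mul_sum]
  conv_lhs => enter [2]; rw [sum_comm]
  simp only [← sum_add_distrib]
  refine sum_congr rfl fun i _ => sum_congr rfl fun j _ => ?_
  rw [hω j i]
  ring

lemma sum_upperTriangle_eq_dotProduct_stressMatrix_mulVec (hω : ∀ i j, ω i j = ω j i)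
    (u : Fin N → ℝ) :
    ∑ i, ∑ j, upperTriangle ω i j * (u i - u j) ^ 2 = u ⬝ᵥ stressMatrix ω *ᵥ u := by
  have double := sum_upperTriangle_add_self (F := fun i j => ω i j * (u i - u j) ^ 2)
    (fun i j => by rw [hω i j]; ring) (fun i => by simp)
  rw [← dotProduct_stressMatrix_mulVec_add_self hω] at double
  simp only [upperTriangle, ite_mul, zero_mul] at double ⊢
  linarith

variable {κ : Type*} [Fintype κ]

lemma stressForm_upperTriangle_apply_self (hω : ∀ i j, ω i j = ω j i)
    (q : Fin N → EuclideanSpace ℝ κ) :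
    stressForm (upperTriangle ω) q q =
      ∑ a, (fun i => q i a) ⬝ᵥ stressMatrix ω *ᵥ (fun i => q i a) := by
  simp only [stressForm_apply_self, EuclideanSpace.real_norm_sq_eq, mul_sum, PiLp.sub_apply,
    ← sum_upperTriangle_eq_dotProduct_stressMatrix_mulVec hω]
  conv_rhs => rw [sum_comm]; enter [2, i]; rw [sum_comm]

lemma stressForm_upperTriangle_nonneg (hω : ∀ i j, ω i j = ω j i) (hΩ : (stressMatrix ω).PosSemidef)
    (q : Fin N → EuclideanSpace ℝ κ) : 0 ≤ stressForm (upperTriangle ω) q q := by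
  rw [stressForm_upperTriangle_apply_self hω]
  exact sum_nonneg fun a _ => hΩ.dotProduct_mulVec_nonneg _

lemma stressForm_upperTriangle_eq_zero_iff (hω : ∀ i j, ω i j = ω j i)
    (hΩ : (stressMatrix ω).PosSemidef) (q : Fin N → EuclideanSpace ℝ κ) :
    stressForm (upperTriangle ω) q q = 0 ↔ ∀ a, stressMatrix ω *ᵥ (fun i => q i a) = 0 := by
  rw [stressForm_upperTriangle_apply_self hω,
    sum_eq_zero_iff_of_nonneg fun a _ => by exact hΩ.dotProduct_mulVec_nonneg _]
  simp [← hΩ.dotProduct_mulVec_zero_iff]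

end StressMatrix

section EuclideanCoordinates

variable {κ : Type*}

lemma exists_affine_of_forall_coord_mem_span [Finite κ] {ι : Type*} {p q : ι → EuclideanSpace ℝ κ}
    (hq : ∀ a, (fun i => q i a) ∈ Submodule.span ℝ (insert 1 (Set.range fun a i => p i a))) :
    ∃ (B : EuclideanSpace ℝ κ →L[ℝ] EuclideanSpace ℝ κ) (s : EuclideanSpace ℝ κ),
      q = fun i => B (p i) + s := by
  classical
  have := Fintype.ofFinite κ
  have coord_eq (a : κ) : ∃ (m : κ → ℝ) (s : ℝ), ∀ i, q i a = ∑ b, m b * p i b + s := by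
    obtain ⟨s, u, hu, hqa⟩ := Submodule.mem_span_insert.1 (hq a)
    obtain ⟨m, rfl⟩ := (Submodule.mem_span_range_iff_exists_fun ℝ).1 hu
    refine ⟨m, s, fun i => ?_⟩
    simpa [add_comm] using congrFun hqa i
  choose M s hMs using coord_eq
  refine ⟨(toEuclideanLin (of M)).toContinuousLinearMap, WithLp.toLp 2 s, ?_⟩
  ext i a
  simp [hMs, toLpLin_apply, mulVec, dotProduct]

lemma quadraticForm_apply_eq_zero_of_vecMulVec_mem_span [Finite κ]
    {Q : QuadraticForm ℝ (EuclideanSpace ℝ κ)} {S : Set (Matrix κ κ ℝ)}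
    (hS : ∀ M ∈ S, ∃ x : EuclideanSpace ℝ κ, Q x = 0 ∧ M = vecMulVec (x ·) (x ·))
    {y : EuclideanSpace ℝ κ} (hy : vecMulVec (y ·) (y ·) ∈ Submodule.span ℝ S) : Q y = 0 := by
  classical
  have := Fintype.ofFinite κ
  let basis := (EuclideanSpace.basisFun κ ℝ).toBasis
  let evalQ : Matrix κ κ ℝ →ₗ[ℝ] ℝ :=
    ∑ a, ∑ b, Q.associated (basis a) (basis b) • entryLinearMap ℝ ℝ a b
  have evalQ_vecMulVec (x : EuclideanSpace ℝ κ) : evalQ (vecMulVec (x ·) (x ·)) = Q x := by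
    rw [← QuadraticMap.associated_eq_self_apply ℝ Q x,
      ← LinearMap.sum_repr_mul_repr_mul basis basis]
    simp [Finsupp.sum_fintype, basis, evalQ, vecMulVec_apply, mul_comm, mul_assoc]
  have span_le_ker : Submodule.span ℝ S ≤ LinearMap.ker evalQ := by
    refine Submodule.span_le.2 fun M hM => ?_
    obtain ⟨x, hx, rfl⟩ := hS M hM
    exact (evalQ_vecMulVec x).trans hx
  exact (evalQ_vecMulVec y).symm.trans (span_le_ker hy)

lemma exists_orthogonal_matrix_of_isometryEquiv [Fintype κ] [DecidableEq κ]
    (R : EuclideanSpace ℝ κ ≃ₗᵢ[ℝ] EuclideanSpace ℝ κ) :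
    ∃ M ∈ orthogonalGroup κ ℝ,
      toEuclideanLin M = (R : EuclideanSpace ℝ κ →ₗ[ℝ] EuclideanSpace ℝ κ) := by
  let basis := EuclideanSpace.basisFun κ ℝ
  refine ⟨_, R.toMatrix_mem_unitaryGroup basis basis, ?_⟩
  rw [toEuclideanLin_eq_toLin_orthonormal]
  exact toLin_toMatrix _ _ _

end EuclideanCoordinates

section Tensegrity

variable {N d : ℕ} {qe : Fin N → EuclideanSpace ℝ (Fin d)} {ω : Fin N → Fin N → ℝ}

lemma isSuperStable_upperTriangle (hω : ∀ i j, ω i j = ω j i) (hΩ : (stressMatrix ω).PosSemidef)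
    (hker : ∀ u : Fin N → ℝ, stressMatrix ω *ᵥ u = 0 ↔
      u ∈ Submodule.span ℝ (insert 1 (Set.range fun a i => qe i a)))
    (hspan : ∀ A : Matrix (Fin d) (Fin d) ℝ, A.IsSymm →
      A ∈ Submodule.span ℝ
        {M : Matrix (Fin d) (Fin d) ℝ | ∃ i j : Fin N, ω i j ≠ 0 ∧
          M = vecMulVec (fun a => qe i a - qe j a) (fun a => qe i a - qe j a)}) :
    IsSuperStable (upperTriangle ω) qe where
  apply_self_eq_zero := (stressForm_upperTriangle_eq_zero_iff hω hΩ qe).2 fun a =>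
    (hker _).2 (Submodule.subset_span (Or.inr ⟨a, rfl⟩))
  nonneg := stressForm_upperTriangle_nonneg hω hΩ
  exists_affine_of_eq_zero v hv := exists_affine_of_forall_coord_mem_span fun a =>
    (hker _).1 ((stressForm_upperTriangle_eq_zero_iff hω hΩ v).1 hv a)
  no_conic Q hQ := by
    have vanishes_on_edges (i j : Fin N) (hij : ω i j ≠ 0) : Q (qe i - qe j) = 0 := by
      rcases lt_trichotomy i j with hlt | rfl | hlt
      · exact hQ i j (upperTriangle_ne_zero.2 ⟨hlt, hij⟩)
      · simp
      · rw [← neg_sub, QuadraticMap.map_neg]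
        exact hQ j i (upperTriangle_ne_zero.2 ⟨hlt, hω i j ▸ hij⟩)
    ext y
    refine quadraticForm_apply_eq_zero_of_vecMulVec_mem_span ?_
      (hspan _ (transpose_vecMulVec _ _))
    rintro M ⟨i, j, hij, rfl⟩
    exact ⟨qe i - qe j, vanishes_on_edges i j hij, rfl⟩

theorem equilibrium_isolated_modulo_rigid_motions_general [NeZero N] (hω : ∀ i j, ω i j = ω j i)
    (hΩ : (stressMatrix ω).PosSemidef)
    (hker : ∀ u : Fin N → ℝ, stressMatrix ω *ᵥ u = 0 ↔
      u ∈ Submodule.span ℝ (insert 1 (Set.range fun a i => qe i a)))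
    (hspan : ∀ A : Matrix (Fin d) (Fin d) ℝ, A.IsSymm →
      A ∈ Submodule.span ℝ
        {M : Matrix (Fin d) (Fin d) ℝ | ∃ i j : Fin N, ω i j ≠ 0 ∧
          M = vecMulVec (fun a => qe i a - qe j a) (fun a => qe i a - qe j a)})
    {k l : Fin N → Fin N → ℝ} (hne : ∀ i j, i < j → k i j ≠ 0 → qe i ≠ qe j)
    (hkl : ∀ i j, i < j → k i j ≠ 0 → 0 < k i j * l i j)
    (hstress : ∀ i j, i < j → springStress k l qe i j = ω i j) :
    fderiv ℝ (springPotential (upperTriangle k) l) qe = 0 ∧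
    IsLocalMin (springPotential (upperTriangle k) l) qe ∧
    ∃ ε > (0 : ℝ), ∀ q : Fin N → EuclideanSpace ℝ (Fin d),
      dist q qe < ε → fderiv ℝ (springPotential (upperTriangle k) l) q = 0 →
      ∃ (R : Matrix (Fin d) (Fin d) ℝ) (t : EuclideanSpace ℝ (Fin d)),
        R ∈ orthogonalGroup (Fin d) ℝ ∧ R.det = 1 ∧ ∀ i, q i = toEuclideanLin R (qe i) + t := by
  have stress_eq : springStress (upperTriangle k) l qe = upperTriangle ω := by
    ext i j
    by_cases hij : i < j
    · simpa [springStress, upperTriangle, hij] using hstress i j hij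
    · simp [springStress, upperTriangle, hij]
  have superStable := isSuperStable_upperTriangle hω hΩ hker hspan
  rw [← stress_eq] at superStable
  have hkl' (i j : Fin N) (hk : upperTriangle k i j ≠ 0) : 0 < upperTriangle k i j * l i j := by
    obtain ⟨hij, hk⟩ := upperTriangle_ne_zero.1 hk
    simpa [upperTriangle, hij] using hkl i j hij hk
  have hne' (i j : Fin N) (hk : upperTriangle k i j ≠ 0) : qe i ≠ qe j :=
    hne i j (upperTriangle_ne_zero.1 hk).1 (upperTriangle_ne_zero.1 hk).2
  have isLocalMin : IsLocalMin (springPotential (upperTriangle k) l) qe :=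
    Eventually.of_forall (superStable.springPotential_le hkl' hne')
  obtain ⟨ε, ε_pos, hε⟩ := Metric.eventually_nhds_iff.1
    (superStable.eventually_isometric_of_fderiv_eq_zero hkl' hne')
  refine ⟨isLocalMin.fderiv_eq_zero, isLocalMin, ε, ε_pos, fun q hq hcrit => ?_⟩
  obtain ⟨R, t, det_eq_one, q_eq⟩ := hε hq hcrit
  obtain ⟨M, M_orthogonal, hM⟩ := exists_orthogonal_matrix_of_isometryEquiv R
  refine ⟨M, t, M_orthogonal, ?_, fun i => ?_⟩
  · rw [← det_eq_one, ← hM, LinearMap.det_toLpLin]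
  · rw [q_eq i, hM]; rfl

end Tensegrity

section ArctanSpring

variable {w r a l : ℝ}

lemma pi_div_arctan_mul_self_pos (hw : w ≠ 0) : 0 < π / arctan w * w := by
  rcases hw.lt_or_gt with hneg | hpos
  · exact mul_pos_of_neg_of_neg (div_neg_of_pos_of_neg pi_pos (arctan_lt_zero.2 hneg)) hneg
  · exact mul_pos (div_pos pi_pos (arctan_pos.2 hpos)) hpos

lemma one_sub_arctan_div_pi_pos (w : ℝ) : 0 < 1 - arctan w / π := by
  rw [sub_pos, div_lt_one pi_pos]
  linarith [arctan_lt_pi_div_two w, pi_pos]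

lemma arctan_spring_mul_pos (hr : 0 < r) (ha : w ≠ 0 → a = π / arctan w)
    (hl : w ≠ 0 → l = r * (1 - arctan w / π)) (hw : w ≠ 0) : 0 < a * w * l := by
  rw [ha hw, hl hw]
  exact mul_pos (pi_div_arctan_mul_self_pos hw) (mul_pos hr (one_sub_arctan_div_pi_pos w))

lemma arctan_spring_stress (hr : 0 < r) (ha : w ≠ 0 → a = π / arctan w)
    (hl : w ≠ 0 → l = r * (1 - arctan w / π)) : a * w * (1 - l / r) = w := by
  rcases eq_or_ne w 0 with rfl | hw
  · simp
  · have arctan_ne : arctan w ≠ 0 := arctan_eq_zero_iff.not.2 hw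
    rw [ha hw, hl hw]
    field_simp
    ring

end ArctanSpring

/-- Theorem 1: under the stated hypotheses, the placement `q^e` is a
critical point and local minimum of the augmented potential `Ṽ`, and it is isolated
modulo rigid motions: all nearby critical points are rigid motions of `q^e`. -/
theorem equilibrium_isolated_modulo_rigid_motions
    {N : ℕ} (hN : 4 ≤ N)
    (qe : Fin N → EuclideanSpace ℝ (Fin 2))
    (hdist : ∀ i j, i ≠ j → qe i ≠ qe j)
    (hli : LinearIndependent ℝ
      ![fun i => qe i 0, fun i => qe i 1, (1 : Fin N → ℝ)])
    (ω : Fin N → Fin N → ℝ)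
    (hωs : ∀ i j, ω i j = ω j i) (hωd : ∀ i, ω i i = 0)
    (hΩ : (stressMatrix ω).PosSemidef)
    (hker : ∀ u : Fin N → ℝ, (stressMatrix ω) *ᵥ u = 0 ↔
        u ∈ Submodule.span ℝ
          ({fun i => qe i 0, fun i => qe i 1, (1 : Fin N → ℝ)} : Set (Fin N → ℝ)))
    (α l : Fin N → Fin N → ℝ)
    (hα : ∀ i j, i ≠ j → ω i j ≠ 0 → α i j = π / Real.arctan (ω i j))
    (hl : ∀ i j, i ≠ j → ω i j ≠ 0 →
      l i j = ‖qe i - qe j‖ * (1 - Real.arctan (ω i j) / π))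
    (hspan : ∀ A : Matrix (Fin 2) (Fin 2) ℝ, A.IsSymm →
      A ∈ Submodule.span ℝ
          {M : Matrix (Fin 2) (Fin 2) ℝ | ∃ i j : Fin N, ω i j ≠ 0 ∧
            M = Matrix.vecMulVec (fun k => qe i k - qe j k) (fun k => qe i k - qe j k)})
    (Vt : (Fin N → EuclideanSpace ℝ (Fin 2)) → ℝ)
    (hVt : Vt = fun q => (1 / 2 : ℝ) * ∑ i : Fin N, ∑ j : Fin N, (if i < j then
        α i j * ω i j * (‖q i - q j‖ - l i j) ^ 2 else 0)) :
    fderiv ℝ Vt qe = 0 ∧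
    IsLocalMin Vt qe ∧
    ∃ ε > (0 : ℝ), ∀ q : Fin N → EuclideanSpace ℝ (Fin 2),
      dist q qe < ε → fderiv ℝ Vt q = 0 →
      ∃ (R : Matrix (Fin 2) (Fin 2) ℝ) (t : EuclideanSpace ℝ (Fin 2)),
        R ∈ Matrix.orthogonalGroup (Fin 2) ℝ ∧ R.det = 1 ∧
        ∀ i, q i = Matrix.toEuclideanLin R (qe i) + t := by
  have : NeZero N := ⟨by lia⟩
  have norm_pos {i j : Fin N} (hij : i < j) : 0 < ‖qe i - qe j‖ :=
    norm_pos_iff.2 (sub_ne_zero.2 (hdist i j hij.ne))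
  have kernel_generators_eq : ({fun i => qe i 0, fun i => qe i 1, 1} : Set (Fin N → ℝ)) =
      insert 1 (Set.range fun (a : Fin 2) i => qe i a) := by
    ext u
    simp [eq_comm (a := u), or_comm, or_left_comm]
  obtain rfl : Vt = springPotential (upperTriangle fun i j => α i j * ω i j) l := by
    simp only [hVt, ← springPotential_upperTriangle]
  exact equilibrium_isolated_modulo_rigid_motions_general hωs hΩ (kernel_generators_eq ▸ hker) hspan
    (fun i j hij _ => hdist i j hij.ne)
    (fun i j hij hk => arctan_spring_mul_pos (norm_pos hij) (hα i j hij.ne) (hl i j hij.ne)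
      (right_ne_zero_of_mul hk))
    (fun i j hij => arctan_spring_stress (norm_pos hij) (hα i j hij.ne) (hl i j hij.ne))
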